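/- The explicit Fock-like action defines a representation of P_BF^{(1,1)}: the linear operators b⁺, b⁻, f⁺, f⁻ on V (defined on the basis as in the context) satisfy all defining relations of the relative parabose set P_BF^{(1,1)}; that is, writing b^{+1} = b⁺, b^{−1} = b⁻, f^{+1} = f⁺, f^{−1} = f⁻, for all ξ,η,ε ∈ {1,−1} (regarded as integers) the following hold as equalities of linear operators on V: [{b^ξ, b^η}, b^ε] = (ε−η) b^ξ + (ε−ξ) b^η; [[f^ξ, f^η], f^ε] = ½(ε−η)² f^ξ − ½(ε−ξ)² f^η; [{b^ξ, b^η}, f^ε] = 0; [[f^ξ, f^η], b^ε] = 0; [{f^ξ, b^η}, b^ε] = (ε−η) f^ξ; {{b^ξ, f^η}, f^ε} = ½(ε−η)² b^ξ, where [X,Y] := XY − YX and {X,Y} := XY + YX denote composition commutator and anticommutator. -/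

import Mathlib

open scoped BigOperators

/-- Indices of the basis vectors `φ_{m,n}`: pairs `(m,n)` of naturals with `n ≤ p`. -/
abbrev PhiIdx (p : ℕ) := {mn : ℕ × ℕ // mn.2 ≤ p}

/-- Indices of the basis vectors `ψ_{m,n}`: pairs `(m,n)` of naturals with
`1 ≤ m` and `1 ≤ n ≤ p - 1`. -/
abbrev PsiIdx (p : ℕ) := {mn : ℕ × ℕ // 1 ≤ mn.1 ∧ 1 ≤ mn.2 ∧ mn.2 + 1 ≤ p}

/-- The index set of the basis of the Fock-like carrier space. -/
abbrev FockIdx (p : ℕ) := PhiIdx p ⊕ PsiIdx p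

/-- The Fock-like carrier space: the free `ℂ`-vector space on the basis
`{φ_{m,n} : m ≥ 0, 0 ≤ n ≤ p} ∪ {ψ_{m,n} : m ≥ 1, 1 ≤ n ≤ p−1}`. -/
abbrev FockV (p : ℕ) := FockIdx p →₀ ℂ

/-- The vector `φ_{m,n}`, extended by `0` outside the range `m ≥ 0`, `0 ≤ n ≤ p`. -/
noncomputable def phi (p : ℕ) (m n : ℤ) : FockV p :=
  if h : 0 ≤ m ∧ 0 ≤ n ∧ n ≤ (p : ℤ) then
    Finsupp.single (Sum.inl ⟨(m.toNat, n.toNat), by show n.toNat ≤ p; omega⟩) 1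
  else 0

/-- The vector `ψ_{m,n}`, extended by the conventions `ψ_{m,0} = ψ_{0,n} = 0`,
`ψ_{m,p} = (1/p)·φ_{m,p}` (for `m ≥ 1`) and `ψ_{m,n} = 0` outside the range. -/
noncomputable def psi (p : ℕ) (m n : ℤ) : FockV p :=
  if h : 1 ≤ m ∧ 1 ≤ n ∧ n ≤ (p : ℤ) - 1 then
    Finsupp.single (Sum.inr ⟨(m.toNat, n.toNat),
      ⟨by show 1 ≤ m.toNat; omega, by show 1 ≤ n.toNat; omega,
       by show n.toNat + 1 ≤ p; omega⟩⟩) 1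
  else if 1 ≤ m ∧ n = (p : ℤ) then (1 / (p : ℂ)) • phi p m n
  else 0

/-- Image of the basis vector `φ_{m,n}` under `b⁺`. -/
noncomputable def bpPhi (p : ℕ) (m n : ℤ) : FockV p :=
  ((-1 : ℂ) ^ n) • phi p (m + 1) n - (2 * (n : ℂ) * (-1 : ℂ) ^ n) • psi p (m + 1) n

/-- Image of the basis vector `ψ_{m,n}` under `b⁺`. -/
noncomputable def bpPsi (p : ℕ) (m n : ℤ) : FockV p :=
  (-(-1 : ℂ) ^ n) • psi p (m + 1) n

/-- Image of the basis vector `φ_{m,n}` under `b⁻`. -/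
noncomputable def bmPhi (p : ℕ) (m n : ℤ) : FockV p :=
  if Even m then
    ((-1 : ℂ) ^ n * (m : ℂ)) • phi p (m - 1) n
      - (2 * (-1 : ℂ) ^ n * (n : ℂ) * (m : ℂ)) • psi p (m - 1) n
  else
    (-(-1 : ℂ) ^ n * (2 * (n : ℂ) - (m : ℂ) - ((p : ℂ) - 1))) • phi p (m - 1) n
      - (2 * (-1 : ℂ) ^ n * (n : ℂ) * ((m : ℂ) - 1)) • psi p (m - 1) n

/-- Image of the basis vector `ψ_{m,n}` under `b⁻`. -/
noncomputable def bmPsi (p : ℕ) (m n : ℤ) : FockV p :=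
  if Even m then
    (-(-1 : ℂ) ^ n) • phi p (m - 1) n
      + ((-1 : ℂ) ^ n * (2 * (n : ℂ) - (m : ℂ) - (p : ℂ))) • psi p (m - 1) n
  else
    (-(-1 : ℂ) ^ n) • phi p (m - 1) n
      - ((-1 : ℂ) ^ n * ((m : ℂ) - 1)) • psi p (m - 1) n

/-- Image of the basis vector `φ_{m,n}` under `f⁺`. -/
noncomputable def fpPhi (p : ℕ) (m n : ℤ) : FockV p := phi p m (n + 1)

/-- Image of the basis vector `ψ_{m,n}` under `f⁺`. -/
noncomputable def fpPsi (p : ℕ) (m n : ℤ) : FockV p := psi p m (n + 1)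

/-- Image of the basis vector `φ_{m,n}` under `f⁻`. -/
noncomputable def fmPhi (p : ℕ) (m n : ℤ) : FockV p :=
  ((n : ℂ) * ((p : ℂ) + 1 - (n : ℂ))) • phi p m (n - 1)

/-- Image of the basis vector `ψ_{m,n}` under `f⁻`. -/
noncomputable def fmPsi (p : ℕ) (m n : ℤ) : FockV p :=
  phi p m (n - 1) + (((n : ℂ) - 1) * ((p : ℂ) - (n : ℂ))) • psi p m (n - 1)

/-- The linear operator on the Fock-like space determined by its values `F m n`
on the basis vectors `φ_{m,n}` and `G m n` on the basis vectors `ψ_{m,n}`. -/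
noncomputable def mkOp (p : ℕ) (F G : ℤ → ℤ → FockV p) : Module.End ℂ (FockV p) :=
  Finsupp.lift (FockV p) ℂ (FockIdx p) fun x =>
    match x with
    | Sum.inl a => F (a.1.1 : ℤ) (a.1.2 : ℤ)
    | Sum.inr a => G (a.1.1 : ℤ) (a.1.2 : ℤ)

/-- The operator `b⁺`. -/
noncomputable def opBp (p : ℕ) : Module.End ℂ (FockV p) := mkOp p (bpPhi p) (bpPsi p)

/-- The operator `b⁻`. -/
noncomputable def opBm (p : ℕ) : Module.End ℂ (FockV p) := mkOp p (bmPhi p) (bmPsi p)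

/-- The operator `f⁺`. -/
noncomputable def opFp (p : ℕ) : Module.End ℂ (FockV p) := mkOp p (fpPhi p) (fpPsi p)

/-- The operator `f⁻`. -/
noncomputable def opFm (p : ℕ) : Module.End ℂ (FockV p) := mkOp p (fmPhi p) (fmPsi p)

/-- `b^ξ` for a sign `ξ`: `b 1 = b⁺`, `b (-1) = b⁻`. -/
noncomputable def opB (p : ℕ) (ξ : ℤ) : Module.End ℂ (FockV p) :=
  if ξ = 1 then opBp p else opBm p

/-- `f^ξ` for a sign `ξ`: `f 1 = f⁺`, `f (-1) = f⁻`. -/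
noncomputable def opF (p : ℕ) (ξ : ℤ) : Module.End ℂ (FockV p) :=
  if ξ = 1 then opFp p else opFm p

/-- The commutator `[X, Y] = X∘Y − Y∘X` of operators. -/
noncomputable def opComm {p : ℕ} (X Y : Module.End ℂ (FockV p)) : Module.End ℂ (FockV p) :=
  X * Y - Y * X

/-- The anticommutator `{X, Y} = X∘Y + Y∘X` of operators. -/
noncomputable def opAComm {p : ℕ} (X Y : Module.End ℂ (FockV p)) : Module.End ℂ (FockV p) :=
  X * Y + Y * X

/-- A sign, i.e. `+1` or `-1`, regarded as an integer. -/
def IsSign (x : ℤ) : Prop := x = 1 ∨ x = -1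

/-- `φ_{m,n}` with natural indices. -/
noncomputable def PP (p m n : ℕ) : FockV p := phi p m n

/-- `ψ_{m,n}` with natural indices. -/
noncomputable def SS (p m n : ℕ) : FockV p := psi p m n

lemma PP_gt {p m n : ℕ} (h : p < n) : PP p m n = 0 := by
  unfold PP phi
  rw [dif_neg]
  omega

lemma SS_zero_left (p n : ℕ) : SS p 0 n = 0 := by
  unfold SS psi
  rw [dif_neg (by simp), if_neg (by simp)]

lemma SS_zero_right (p m : ℕ) (hp : 1 ≤ p) : SS p m 0 = 0 := by
  unfold SS psi
  rw [dif_neg (by simp), if_neg (by push_cast; omega)]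

lemma SS_gt {p m n : ℕ} (h : p < n) : SS p m n = 0 := by
  unfold SS psi
  rw [dif_neg (by omega), if_neg (by omega)]

lemma SS_top (p m : ℕ) : SS p (m + 1) p = (1 / (p : ℂ)) • PP p (m + 1) p := by
  unfold SS PP psi
  rw [dif_neg (by omega), if_pos (by constructor <;> push_cast <;> omega)]

lemma SS_top' (p m : ℕ) (hp : 1 ≤ p) : PP p (m + 1) p = (p : ℂ) • SS p (m + 1) p := by
  have : (p : ℂ) ≠ 0 := by exact_mod_cast (by omega : p ≠ 0)
  rw [SS_top, smul_smul, mul_one_div_cancel this, one_smul]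

lemma mkOp_PP {p : ℕ} (F G : ℤ → ℤ → FockV p) {m n : ℕ} (h : n ≤ p) :
    mkOp p F G (PP p m n) = F m n := by
  unfold PP phi mkOp
  rw [dif_pos (by omega)]
  simp

lemma mkOp_SS {p : ℕ} (F G : ℤ → ℤ → FockV p) {m n : ℕ} (h : n + 1 < p) :
    mkOp p F G (SS p (m + 1) (n + 1)) = G (m + 1 : ℕ) (n + 1 : ℕ) := by
  unfold SS psi mkOp
  rw [dif_pos (by omega)]
  simp

/-- Two operators agreeing on all `PP` and on `SS` with positive indices are equal. -/
lemma op_ext {p : ℕ} {X Y : Module.End ℂ (FockV p)}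
    (h1 : ∀ m n, X (PP p m n) = Y (PP p m n))
    (h2 : ∀ m n, X (SS p (m + 1) (n + 1)) = Y (SS p (m + 1) (n + 1))) : X = Y := by
  apply Finsupp.lhom_ext'
  rintro (⟨⟨m, n⟩, h⟩ | ⟨⟨m, n⟩, h, h', h''⟩)
  · apply LinearMap.ext_ring
    have := h1 m n
    unfold PP phi at this
    rw [dif_pos (by simp at h; omega)] at this
    simpa using this
  · apply LinearMap.ext_ring
    simp only at h h' h''
    obtain ⟨m, rfl⟩ := Nat.exists_eq_add_of_le' h
    obtain ⟨n, rfl⟩ := Nat.exists_eq_add_of_le' h'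
    have := h2 m n
    unfold SS psi at this
    rw [dif_pos (by omega)] at this
    simpa using this

lemma bp_PP (p m n : ℕ) : opBp p (PP p m n) =
    ((-1 : ℂ) ^ n) • PP p (m + 1) n - (2 * (n : ℂ) * (-1 : ℂ) ^ n) • SS p (m + 1) n := by
  by_cases h : n ≤ p
  · rw [opBp, mkOp_PP _ _ h]
    simp [bpPhi, PP, SS]
  · rw [PP_gt (by omega), PP_gt (by omega), SS_gt (by omega)]; simp

lemma bp_SS (p m n : ℕ) (hp : 1 ≤ p) : opBp p (SS p (m + 1) (n + 1)) =
    ((-1 : ℂ) ^ n) • SS p (m + 2) (n + 1) := by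
  rcases lt_trichotomy (n + 1) p with h | h | h
  · rw [opBp, mkOp_SS _ _ h]
    simp [bpPsi, SS, zpow_add₀, add_assoc]
  · have h0 : (p : ℂ) ≠ 0 := by exact_mod_cast (by omega : p ≠ 0)
    rw [h, SS_top, map_smul, bp_PP, SS_top' _ _ hp, ← h]
    rw [← h] at h0
    push_cast at *
    match_scalars
    field_simp
    ring
  · rw [SS_gt (by omega), SS_gt (by omega)]; simp

lemma fp_PP (p m n : ℕ) : opFp p (PP p m n) = PP p m (n + 1) := by
  by_cases h : n ≤ p
  · rw [opFp, mkOp_PP _ _ h]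
    simp [fpPhi, PP]
  · rw [PP_gt (by omega), PP_gt (by omega)]; simp

lemma fp_SS (p m n : ℕ) : opFp p (SS p (m + 1) (n + 1)) = SS p (m + 1) (n + 2) := by
  rcases lt_trichotomy (n + 1) p with h | h | h
  · rw [opFp, mkOp_SS _ _ h]
    simp [fpPsi, SS, add_assoc]
  · rw [h, SS_top, map_smul, fp_PP, PP_gt (by omega), SS_gt (by omega)]; simp
  · rw [SS_gt (by omega), SS_gt (by omega)]; simp

lemma fm_PP_zero (p m : ℕ) : opFm p (PP p m 0) = 0 := by
  rw [opFm, mkOp_PP _ _ (by omega)]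
  simp [fmPhi]

lemma fm_PP (p m n : ℕ) : opFm p (PP p m (n + 1)) =
    (((n : ℂ) + 1) * ((p : ℂ) - n)) • PP p m n := by
  by_cases h : n + 1 ≤ p
  · rw [opFm, mkOp_PP _ _ h]
    simp [fmPhi, PP]
  · rw [PP_gt (by omega)]
    rcases (by omega : n = p ∨ p < n) with rfl | h
    · simp
    · rw [PP_gt (by omega)]; simp

lemma fm_SS (p m n : ℕ) (hp : 1 ≤ p) : opFm p (SS p (m + 1) (n + 1)) =
    PP p (m + 1) n + ((n : ℂ) * ((p : ℂ) - n - 1)) • SS p (m + 1) n := by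
  rcases lt_trichotomy (n + 1) p with h | h | h
  · rw [opFm, mkOp_SS _ _ h]
    simp [fmPsi, SS, PP, sub_sub]
  · have h0 : (p : ℂ) ≠ 0 := by exact_mod_cast (by omega : p ≠ 0)
    subst h
    rw [SS_top, map_smul, fm_PP]
    push_cast at *
    match_scalars <;> field_simp <;> ring
  · rw [SS_gt (by omega)]
    rcases (by omega : n = p ∨ p < n) with rfl | h
    · rw [SS_top' _ _ hp]; simp only [map_zero]; module
    · rw [PP_gt (by omega), SS_gt (by omega)]; simp

lemma bm_PP_zero (p n : ℕ) : opBm p (PP p 0 n) = 0 := by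
  by_cases h : n ≤ p
  · rw [opBm, mkOp_PP _ _ h]
    simp [bmPhi]
  · rw [PP_gt (by omega)]; simp

lemma bm_PP_odd (p m n : ℕ) (hm : Even m) : opBm p (PP p (m + 1) n) =
    (-(-1 : ℂ) ^ n * (2 * (n : ℂ) - m - p)) • PP p m n
      - (2 * (-1 : ℂ) ^ n * (n : ℂ) * (m : ℂ)) • SS p m n := by
  by_cases h : n ≤ p
  · rw [opBm, mkOp_PP _ _ h]
    have : ¬ Odd m := by simpa using hm
    simp [bmPhi, PP, SS, this]
    module
  · rw [PP_gt (by omega), PP_gt (by omega), SS_gt (by omega)]; simp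

lemma bm_PP_even (p m n : ℕ) (hm : ¬ Even m) : opBm p (PP p (m + 1) n) =
    ((-1 : ℂ) ^ n * ((m : ℂ) + 1)) • PP p m n
      - (2 * (-1 : ℂ) ^ n * (n : ℂ) * ((m : ℂ) + 1)) • SS p m n := by
  by_cases h : n ≤ p
  · rw [opBm, mkOp_PP _ _ h]
    have : Odd m := by simpa using hm
    simp [bmPhi, PP, SS, this]
  · rw [PP_gt (by omega), PP_gt (by omega), SS_gt (by omega)]; simp

lemma bm_SS_odd (p m n : ℕ) (hp : 1 ≤ p) (hm : Even m) : opBm p (SS p (m + 1) (n + 1)) =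
    ((-1 : ℂ) ^ n) • PP p m (n + 1) + ((-1 : ℂ) ^ n * (m : ℂ)) • SS p m (n + 1) := by
  rcases lt_trichotomy (n + 1) p with h | h | h
  · rw [opBm, mkOp_SS _ _ h]
    simp [bmPsi, PP, SS, hm, zpow_add₀]
  · have h0 : (p : ℂ) ≠ 0 := by exact_mod_cast (by omega : p ≠ 0)
    subst h
    rw [SS_top, map_smul, bm_PP_odd _ _ _ hm]
    rcases m with _ | m
    · rw [SS_zero_left]
      push_cast at *
      match_scalars <;> field_simp <;> ring
    · rw [SS_top' _ _ hp]
      push_cast at *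
      match_scalars <;> field_simp <;> ring
  · rw [SS_gt (by omega), PP_gt (by omega), SS_gt (by omega)]; simp

lemma bm_SS_even (p m n : ℕ) (hp : 1 ≤ p) (hm : ¬ Even m) : opBm p (SS p (m + 1) (n + 1)) =
    ((-1 : ℂ) ^ n) • PP p m (n + 1)
      - ((-1 : ℂ) ^ n * (2 * (n : ℂ) + 1 - m - p)) • SS p m (n + 1) := by
  rcases lt_trichotomy (n + 1) p with h | h | h
  · rw [opBm, mkOp_SS _ _ h]
    have : Odd m := by simpa using hm
    simp [bmPsi, PP, SS, this, zpow_add₀]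
    module
  · have h0 : (p : ℂ) ≠ 0 := by exact_mod_cast (by omega : p ≠ 0)
    subst h
    rw [SS_top, map_smul, bm_PP_even _ _ _ hm]
    rcases m with _ | m
    · simp at hm
    · rw [SS_top' _ _ hp]
      push_cast at *
      match_scalars <;> field_simp <;> ring
  · rw [SS_gt (by omega), PP_gt (by omega), SS_gt (by omega)]; simp

set_option linter.unusedSimpArgs false
set_option linter.unnecessarySeqFocus false

lemma elimM2 {P : ℕ → Prop} (h0 : P 0)
    (he : ∀ k, Even k → P (k + 1)) (ho : ∀ k, ¬ Even k → P (k + 1)) (m : ℕ) : P m := by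
  rcases m with _ | k
  · exact h0
  · exact (em (Even k)).elim (he k) (ho k)

lemma elimM3 {P : ℕ → Prop} (h0 : P 0) (h1 : P 1)
    (he : ∀ k, Even k → P (k + 2)) (ho : ∀ k, ¬ Even k → P (k + 2)) (m : ℕ) : P m := by
  rcases m with _ | _ | k
  · exact h0
  · exact h1
  · exact (em (Even k)).elim (he k) (ho k)

lemma elimM4 {P : ℕ → Prop} (h0 : P 0) (h1 : P 1) (h2 : P 2)
    (he : ∀ k, Even k → P (k + 3)) (ho : ∀ k, ¬ Even k → P (k + 3)) (m : ℕ) : P m := by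
  rcases m with _ | _ | _ | k
  · exact h0
  · exact h1
  · exact h2
  · exact (em (Even k)).elim (he k) (ho k)

lemma elimN2 {P : ℕ → Prop} (h0 : P 0) (he : ∀ k, (-1 : ℂ) ^ k = 1 → P (k + 1))
    (ho : ∀ k, (-1 : ℂ) ^ k = -1 → P (k + 1)) (m : ℕ) : P m := by
  rcases m with _ | k
  · exact h0
  · exact (neg_one_pow_eq_or ℂ k).elim (he k) (ho k)

lemma elimN3 {P : ℕ → Prop} (h0 : P 0) (h1 : P 1) (he : ∀ k, (-1 : ℂ) ^ k = 1 → P (k + 2))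
    (ho : ∀ k, (-1 : ℂ) ^ k = -1 → P (k + 2)) (m : ℕ) : P m := by
  rcases m with _ | _ | k
  · exact h0
  · exact h1
  · exact (neg_one_pow_eq_or ℂ k).elim (he k) (ho k)

lemma elimN4 {P : ℕ → Prop} (h0 : P 0) (h1 : P 1) (h2 : P 2)
    (he : ∀ k, (-1 : ℂ) ^ k = 1 → P (k + 3))
    (ho : ∀ k, (-1 : ℂ) ^ k = -1 → P (k + 3)) (m : ℕ) : P m := by
  rcases m with _ | _ | _ | k
  · exact h0
  · exact h1
  · exact h2
  · exact (neg_one_pow_eq_or ℂ k).elim (he k) (ho k)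

set_option maxHeartbeats 0 in
lemma relsA (p : ℕ) (hp : 1 ≤ p) :
    (opBp p * opBm p + opBm p * opBp p) * opBp p - opBp p * (opBp p * opBm p + opBm p * opBp p) = (2 : ℂ) • opBp p ∧
    opBp p * opBp p * opFp p = opFp p * opBp p * opBp p ∧
    (opBp p * opBm p + opBm p * opBp p) * opFp p - opFp p * (opBp p * opBm p + opBm p * opBp p) = 0 ∧
    (opFp p * opBp p + opBp p * opFp p) * opBm p - opBm p * (opFp p * opBp p + opBp p * opFp p) = (-2 : ℂ) • opFp p ∧
    opBp p * opBp p * opFm p = opFm p * opBp p * opBp p ∧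
    (opBp p * opBm p + opBm p * opBp p) * opFm p - opFm p * (opBp p * opBm p + opBm p * opBp p) = 0 ∧
    (opFm p * opBp p + opBp p * opFm p) * opBm p - opBm p * (opFm p * opBp p + opBp p * opFm p) = (-2 : ℂ) • opFm p := by
  have hS0 := SS_zero_left p
  have hS1 := fun m => SS_zero_right p m hp
  have e1 := fun m n => bp_SS p m n hp
  have e2 := fun m n => fm_SS p m n hp
  have e3 := fun m n => bm_SS_odd p m n hp
  have e4 := fun m n => bm_SS_even p m n hp
  clear hp
  refine ⟨?_, ?_, ?_, ?_, ?_, ?_, ?_⟩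
  all_goals
    refine op_ext ?_ ?_
    on_goal 1 => intro m; induction m using elimM3 <;> intro n <;> induction n using elimN3
    on_goal -1 => intro m; induction m using elimM2 <;> intro n <;> induction n using elimN2
  all_goals
    simp only [Module.End.mul_apply, LinearMap.add_apply, LinearMap.sub_apply, LinearMap.smul_apply,
      LinearMap.zero_apply, map_add, map_sub, map_smul, map_zero, smul_zero, zero_add, add_zero,
      sub_zero, bp_PP, fp_PP, fp_SS, fm_PP_zero, fm_PP, bm_PP_zero, bm_PP_odd, bm_PP_even, *,
      Nat.even_add_one, Even.zero, not_true_eq_false, not_false_eq_true, pow_succ,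
      pow_zero, Nat.cast_add, Nat.cast_one, Nat.cast_zero, Nat.cast_ofNat]
    try module

set_option maxHeartbeats 0 in
lemma relsA2 (p : ℕ) (hp : 1 ≤ p) :
    (opFp p * opFm p - opFm p * opFp p) * opFp p - opFp p * (opFp p * opFm p - opFm p * opFp p) = (2 : ℂ) • opFp p ∧
    (opFp p * opFm p - opFm p * opFp p) * opBp p - opBp p * (opFp p * opFm p - opFm p * opFp p) = 0 ∧
    (opBp p * opFp p + opFp p * opBp p) * opFp p + opFp p * (opBp p * opFp p + opFp p * opBp p) = 0 ∧
    (opBp p * opFp p + opFp p * opBp p) * opFm p + opFm p * (opBp p * opFp p + opFp p * opBp p) = (2 : ℂ) • opBp p ∧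
    (opFp p * opFm p - opFm p * opFp p) * opBm p - opBm p * (opFp p * opFm p - opFm p * opFp p) = 0 ∧
    (opBm p * opFp p + opFp p * opBm p) * opFp p + opFp p * (opBm p * opFp p + opFp p * opBm p) = 0 ∧
    (opBm p * opFp p + opFp p * opBm p) * opFm p + opFm p * (opBm p * opFp p + opFp p * opBm p) = (2 : ℂ) • opBm p := by
  have hS0 := SS_zero_left p
  have hS1 := fun m => SS_zero_right p m hp
  have e1 := fun m n => bp_SS p m n hp
  have e2 := fun m n => fm_SS p m n hp
  have e3 := fun m n => bm_SS_odd p m n hp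
  have e4 := fun m n => bm_SS_even p m n hp
  clear hp
  refine ⟨?_, ?_, ?_, ?_, ?_, ?_, ?_⟩
  all_goals
    refine op_ext ?_ ?_
    on_goal 1 => intro m; induction m using elimM3 <;> intro n <;> induction n using elimN3
    on_goal -1 => intro m; induction m using elimM2 <;> intro n <;> induction n using elimN2
  all_goals
    simp only [Module.End.mul_apply, LinearMap.add_apply, LinearMap.sub_apply, LinearMap.smul_apply,
      LinearMap.zero_apply, map_add, map_sub, map_smul, map_zero, smul_zero, zero_add, add_zero,
      sub_zero, bp_PP, fp_PP, fp_SS, fm_PP_zero, fm_PP, bm_PP_zero, bm_PP_odd, bm_PP_even, *,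
      Nat.even_add_one, Even.zero, not_true_eq_false, not_false_eq_true, pow_succ,
      pow_zero, Nat.cast_add, Nat.cast_one, Nat.cast_zero, Nat.cast_ofNat]
    try module

set_option maxHeartbeats 0 in
lemma relsB (p : ℕ) (hp : 1 ≤ p) :
    (opBp p * opBm p + opBm p * opBp p) * opBm p - opBm p * (opBp p * opBm p + opBm p * opBp p) = (-2 : ℂ) • opBm p ∧
    opBm p * opBm p * opFp p = opFp p * opBm p * opBm p ∧
    opBm p * opBm p * opFm p = opFm p * opBm p * opBm p := by
  have hS0 := SS_zero_left p
  have hS1 := fun m => SS_zero_right p m hp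
  have e1 := fun m n => bp_SS p m n hp
  have e2 := fun m n => fm_SS p m n hp
  have e3 := fun m n => bm_SS_odd p m n hp
  have e4 := fun m n => bm_SS_even p m n hp
  clear hp
  refine ⟨?_, ?_, ?_⟩
  all_goals
    refine op_ext ?_ ?_
    on_goal 1 => intro m; induction m using elimM4 <;> intro n <;> induction n using elimN3
    on_goal -1 => intro m; induction m using elimM3 <;> intro n <;> induction n using elimN2
  all_goals
    simp only [Module.End.mul_apply, LinearMap.add_apply, LinearMap.sub_apply, LinearMap.smul_apply,
      LinearMap.zero_apply, map_add, map_sub, map_smul, map_zero, smul_zero, zero_add, add_zero,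
      sub_zero, bp_PP, fp_PP, fp_SS, fm_PP_zero, fm_PP, bm_PP_zero, bm_PP_odd, bm_PP_even, *,
      Nat.even_add_one, Even.zero, not_true_eq_false, not_false_eq_true, pow_succ,
      pow_zero, Nat.cast_add, Nat.cast_one, Nat.cast_zero, Nat.cast_ofNat]
    try module

set_option maxHeartbeats 0 in
lemma relsC (p : ℕ) (hp : 1 ≤ p) :
    (opFp p * opFm p - opFm p * opFp p) * opFm p - opFm p * (opFp p * opFm p - opFm p * opFp p) = (-2 : ℂ) • opFm p ∧
    (opBp p * opFm p + opFm p * opBp p) * opFm p + opFm p * (opBp p * opFm p + opFm p * opBp p) = 0 ∧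
    (opBm p * opFm p + opFm p * opBm p) * opFm p + opFm p * (opBm p * opFm p + opFm p * opBm p) = 0 := by
  have hS0 := SS_zero_left p
  have hS1 := fun m => SS_zero_right p m hp
  have e1 := fun m n => bp_SS p m n hp
  have e2 := fun m n => fm_SS p m n hp
  have e3 := fun m n => bm_SS_odd p m n hp
  have e4 := fun m n => bm_SS_even p m n hp
  clear hp
  refine ⟨?_, ?_, ?_⟩
  all_goals
    refine op_ext ?_ ?_
    on_goal 1 => intro m; induction m using elimM3 <;> intro n <;> induction n using elimN4
    on_goal -1 => intro m; induction m using elimM2 <;> intro n <;> induction n using elimN3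
  all_goals
    simp only [Module.End.mul_apply, LinearMap.add_apply, LinearMap.sub_apply, LinearMap.smul_apply,
      LinearMap.zero_apply, map_add, map_sub, map_smul, map_zero, smul_zero, zero_add, add_zero,
      sub_zero, bp_PP, fp_PP, fp_SS, fm_PP_zero, fm_PP, bm_PP_zero, bm_PP_odd, bm_PP_even, *,
      Nat.even_add_one, Even.zero, not_true_eq_false, not_false_eq_true, pow_succ,
      pow_zero, Nat.cast_add, Nat.cast_one, Nat.cast_zero, Nat.cast_ofNat]
    try module


set_option maxHeartbeats 4000000 in
lemma alg_rels {A : Type*} [Ring A] [Algebra ℂ A] (b c f g : A)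
    (hA : (b * c + c * b) * b - b * (b * c + c * b) = (2 : ℂ) • b ∧
      b * b * f = f * b * b ∧
      (b * c + c * b) * f - f * (b * c + c * b) = 0 ∧
      (f * b + b * f) * c - c * (f * b + b * f) = (-2 : ℂ) • f ∧
      b * b * g = g * b * b ∧
      (b * c + c * b) * g - g * (b * c + c * b) = 0 ∧
      (g * b + b * g) * c - c * (g * b + b * g) = (-2 : ℂ) • g)
    (hA2 : (f * g - g * f) * f - f * (f * g - g * f) = (2 : ℂ) • f ∧
      (f * g - g * f) * b - b * (f * g - g * f) = 0 ∧
      (b * f + f * b) * f + f * (b * f + f * b) = 0 ∧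
      (b * f + f * b) * g + g * (b * f + f * b) = (2 : ℂ) • b ∧
      (f * g - g * f) * c - c * (f * g - g * f) = 0 ∧
      (c * f + f * c) * f + f * (c * f + f * c) = 0 ∧
      (c * f + f * c) * g + g * (c * f + f * c) = (2 : ℂ) • c)
    (hB : (b * c + c * b) * c - c * (b * c + c * b) = (-2 : ℂ) • c ∧
      c * c * f = f * c * c ∧
      c * c * g = g * c * c)
    (hC : (f * g - g * f) * g - g * (f * g - g * f) = (-2 : ℂ) • g ∧
      (b * g + g * b) * g + g * (b * g + g * b) = 0 ∧
      (c * g + g * c) * g + g * (c * g + g * c) = 0) (ξ η ε : ℤ)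
    (hξ : IsSign ξ) (hη : IsSign η) (hε : IsSign ε) (B F : ℤ → A)
    (hB1 : B 1 = b) (hB2 : B (-1) = c) (hF1 : F 1 = f) (hF2 : F (-1) = g) :
    ((B ξ * B η + B η * B ξ) * B ε - B ε * (B ξ * B η + B η * B ξ)
        = ((ε - η : ℤ) : ℂ) • B ξ + ((ε - ξ : ℤ) : ℂ) • B η) ∧
    ((F ξ * F η - F η * F ξ) * F ε - F ε * (F ξ * F η - F η * F ξ)
        = ((((ε - η) ^ 2 : ℤ) : ℂ) / 2) • F ξ - ((((ε - ξ) ^ 2 : ℤ) : ℂ) / 2) • F η) ∧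
    ((B ξ * B η + B η * B ξ) * F ε - F ε * (B ξ * B η + B η * B ξ) = 0) ∧
    ((F ξ * F η - F η * F ξ) * B ε - B ε * (F ξ * F η - F η * F ξ) = 0) ∧
    ((F ξ * B η + B η * F ξ) * B ε - B ε * (F ξ * B η + B η * F ξ)
        = ((ε - η : ℤ) : ℂ) • F ξ) ∧
    ((B ξ * F η + F η * B ξ) * F ε + F ε * (B ξ * F η + F η * B ξ)
        = ((((ε - η) ^ 2 : ℤ) : ℂ) / 2) • B ξ) := by
  obtain ⟨a1, a2, a3, a4, a5, a6, a7⟩ := hA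
  obtain ⟨c1, c2, c3, c4, c5, c6, c7⟩ := hA2
  obtain ⟨d1, d2, d3⟩ := hB
  obtain ⟨g1, g2, g3⟩ := hC
  simp only [mul_add, add_mul, mul_sub, sub_mul, mul_assoc] at a1 a2 a3 a4 a5 a6 a7
  simp only [mul_add, add_mul, mul_sub, sub_mul, mul_assoc] at c1 c2 c3 c4 c5 c6 c7
  simp only [mul_add, add_mul, mul_sub, sub_mul, mul_assoc] at d1 d2 d3 g1 g2 g3
  rcases hξ with rfl | rfl <;> rcases hη with rfl | rfl <;> rcases hε with rfl | rfl
  all_goals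
    simp only [hB1, hB2, hF1, hF2, mul_add, add_mul, mul_sub, sub_mul, mul_assoc]
    push_cast
    refine ⟨?_, ?_, ?_, ?_, ?_, ?_⟩
    · first
      | module
      | linear_combination (norm := module) a1
      | linear_combination (norm := module) (-2 : ℂ) • a1
      | linear_combination (norm := module) d1
      | linear_combination (norm := module) (-2 : ℂ) • d1
    · first
      | module
      | linear_combination (norm := module) c1
      | linear_combination (norm := module) (-1 : ℂ) • c1
      | linear_combination (norm := module) g1
      | linear_combination (norm := module) (-1 : ℂ) • g1
    · first
      | module
      | linear_combination (norm := module) a3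
      | linear_combination (norm := module) a6
      | linear_combination (norm := module) (2 : ℂ) • a2
      | linear_combination (norm := module) (2 : ℂ) • a5
      | linear_combination (norm := module) (2 : ℂ) • d2
      | linear_combination (norm := module) (2 : ℂ) • d3
    · first
      | module
      | linear_combination (norm := module) c2
      | linear_combination (norm := module) c5
      | linear_combination (norm := module) (-1 : ℂ) • c2
      | linear_combination (norm := module) (-1 : ℂ) • c5
    · first
      | linear_combination (norm := module) a4
      | linear_combination (norm := module) a7
      | linear_combination (norm := module) (-1 : ℂ) • a2
      | linear_combination (norm := module) (-1 : ℂ) • a5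
      | linear_combination (norm := module) (-1 : ℂ) • d2
      | linear_combination (norm := module) (-1 : ℂ) • d3
      | linear_combination (norm := module) (-1 : ℂ) • a4 - a3
      | linear_combination (norm := module) (-1 : ℂ) • a7 - a6
    · first
      | linear_combination (norm := module) c3
      | linear_combination (norm := module) c6
      | linear_combination (norm := module) g2
      | linear_combination (norm := module) g3
      | linear_combination (norm := module) c4
      | linear_combination (norm := module) c7
      | linear_combination (norm := module) c4 + c2
      | linear_combination (norm := module) c7 + c5
      | linear_combination (norm := module) c4 - c2
      | linear_combination (norm := module) c7 - c5

/-- The explicit Fock-like action defines a representation of `P_BF^{(1,1)}`: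
the operators `b⁺, b⁻, f⁺, f⁻` on `V` satisfy all the defining relations
of the relative parabose set. -/
theorem fock_action_is_representation (p : ℕ) (hp : 1 ≤ p) :
    ∀ (ξ η ε : ℤ), IsSign ξ → IsSign η → IsSign ε →
      (opComm (opAComm (opB p ξ) (opB p η)) (opB p ε)
        = ((ε - η : ℤ) : ℂ) • opB p ξ + ((ε - ξ : ℤ) : ℂ) • opB p η) ∧
      (opComm (opComm (opF p ξ) (opF p η)) (opF p ε)
        = ((((ε - η) ^ 2 : ℤ) : ℂ) / 2) • opF p ξ - ((((ε - ξ) ^ 2 : ℤ) : ℂ) / 2) • opF p η) ∧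
      (opComm (opAComm (opB p ξ) (opB p η)) (opF p ε) = 0) ∧
      (opComm (opComm (opF p ξ) (opF p η)) (opB p ε) = 0) ∧
      (opComm (opAComm (opF p ξ) (opB p η)) (opB p ε) = ((ε - η : ℤ) : ℂ) • opF p ξ) ∧
      (opAComm (opAComm (opB p ξ) (opF p η)) (opF p ε)
        = ((((ε - η) ^ 2 : ℤ) : ℂ) / 2) • opB p ξ) := by
  intro ξ η ε hξ hη hε
  exact alg_rels (opBp p) (opBm p) (opFp p) (opFm p) (relsA p hp) (relsA2 p hp) (relsB p hp)
    (relsC p hp) ξ η ε hξ hη hε (opB p) (opF p) rfl rfl rfl rfl
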